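/- Fix μ ∈ ℝ. For every k ≥ 1, all roots of the polynomial λ ↦ G_k(λ,μ) are real and simple. -/

import Mathlib

open Polynomial

/-- `G_k(λ,μ)` as a polynomial in `λ` over `ℂ`, for fixed real `μ`:
`G_0 = 1`, `G_1 = μ - λ`, `G_{k+1} = (-λ-μ)G_k - 4G_{k-1}`. -/
noncomputable def Gpoly (μ : ℝ) : ℕ → Polynomial ℂ
  | 0 => 1
  | 1 => C (μ : ℂ) - X
  | (k + 2) => (-X - C (μ : ℂ)) * Gpoly μ (k + 1) - 4 * Gpoly μ k

/-- Imaginary part of the Christoffel–Darboux identity. -/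
lemma G_wronskian_im (μ : ℝ) (z : ℂ) (k : ℕ) :
    ∃ S : ℝ, 0 < S ∧
      ((Gpoly μ (k + 1)).eval z * (starRingEnd ℂ) ((Gpoly μ k).eval z)).im = -z.im * S := by
  induction k with
  | zero => exact ⟨1, one_pos, by simp [Gpoly]⟩
  | succ k ih =>
    obtain ⟨S, hS, h⟩ := ih
    refine ⟨Complex.normSq ((Gpoly μ (k + 1)).eval z) + 4 * S,
      by linarith [Complex.normSq_nonneg ((Gpoly μ (k + 1)).eval z)], ?_⟩
    have e : (Gpoly μ (k + 1 + 1)).eval z =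
        (-z - μ) * (Gpoly μ (k + 1)).eval z - 4 * (Gpoly μ k).eval z := by
      simp [Gpoly]
    rw [e]
    generalize (Gpoly μ (k + 1)).eval z = a at *
    generalize (Gpoly μ k).eval z = b at *
    simp [Complex.normSq_apply] at h ⊢
    linear_combination 4 * h

lemma G_eval_real (μ x : ℝ) (k : ℕ) :
    (∃ a : ℝ, (Gpoly μ k).eval (x : ℂ) = a) ∧
      ∃ b : ℝ, (Gpoly μ (k + 1)).eval (x : ℂ) = b := by
  induction k with
  | zero => exact ⟨⟨1, by simp [Gpoly]⟩, ⟨μ - x, by simp [Gpoly]⟩⟩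
  | succ k ih =>
    obtain ⟨⟨a, ha⟩, ⟨b, hb⟩⟩ := ih
    exact ⟨⟨b, hb⟩, ⟨(-x - μ) * b - 4 * a, by simp [Gpoly, ha, hb]⟩⟩

/-- Confluent Christoffel–Darboux identity. -/
lemma G_wronskian_deriv (μ x : ℝ) (k : ℕ) :
    ∃ S : ℝ, 0 < S ∧
      (derivative (Gpoly μ (k + 1))).eval (x : ℂ) * (Gpoly μ k).eval (x : ℂ)
        - (derivative (Gpoly μ k)).eval (x : ℂ) * (Gpoly μ (k + 1)).eval (x : ℂ) = -(S : ℂ) := by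
  induction k with
  | zero => exact ⟨1, one_pos, by simp [Gpoly]⟩
  | succ k ih =>
    obtain ⟨S, hS, h⟩ := ih
    obtain ⟨-, b, hb⟩ := G_eval_real μ x k
    refine ⟨b ^ 2 + 4 * S, by positivity, ?_⟩
    have e : (Gpoly μ (k + 1 + 1)).eval (x : ℂ) =
        (-x - μ) * (Gpoly μ (k + 1)).eval (x : ℂ) - 4 * (Gpoly μ k).eval (x : ℂ) := by
      simp [Gpoly]
    have e' : (derivative (Gpoly μ (k + 1 + 1))).eval (x : ℂ) =
        -(Gpoly μ (k + 1)).eval (x : ℂ)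
        + (-x - μ) * (derivative (Gpoly μ (k + 1))).eval (x : ℂ)
        - 4 * (derivative (Gpoly μ k)).eval (x : ℂ) := by
      simp [Gpoly]
    rw [e, e']
    rw [hb] at h ⊢
    push_cast
    linear_combination 4 * h

theorem G_roots_real_simple (μ : ℝ) (k : ℕ) (hk : 1 ≤ k) (z : ℂ)
    (hz : (Gpoly μ k).IsRoot z) :
    z.im = 0 ∧ (Gpoly μ k).rootMultiplicity z = 1 := by
  obtain ⟨n, rfl⟩ : ∃ n, k = n + 1 := ⟨k - 1, by omega⟩
  have hz0 : (Gpoly μ (n + 1)).eval z = 0 := hz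
  have him : z.im = 0 := by
    obtain ⟨S, hS, h⟩ := G_wronskian_im μ z n
    rw [hz0] at h
    simpa [hS.ne'] using h
  refine ⟨him, ?_⟩
  obtain ⟨x, rfl⟩ : ∃ x : ℝ, z = x := ⟨z.re, by apply Complex.ext <;> simp [him]⟩
  have hd : (derivative (Gpoly μ (n + 1))).eval (x : ℂ) ≠ 0 := by
    intro h0
    obtain ⟨S, hS, h⟩ := G_wronskian_deriv μ x n
    rw [hz0, h0] at h
    simp [hS.ne'] at h
  have hne : Gpoly μ (n + 1) ≠ 0 := by
    intro h0
    simp [h0] at hd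
  have h1 : 0 < (Gpoly μ (n + 1)).rootMultiplicity (x : ℂ) := (rootMultiplicity_pos hne).2 hz
  have h2 : ¬ 1 < (Gpoly μ (n + 1)).rootMultiplicity (x : ℂ) := fun h =>
    hd ((one_lt_rootMultiplicity_iff_isRoot hne).1 h).2
  omega
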